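/- arXiv:1107.2361 — 5 statements merged into one kernel-verified Lean document; each statement's English description precedes it below -/
import Mathlib

section
/- Let L be a g-symmetric endomorphism of V and let p be a real polynomial with p(L) = 0 (for instance the minimal polynomial of L). Then for every g-skew-symmetric endomorphism X of V, the endomorphism D_p(L,X) lies in 𝔤_L, i.e. D_p(L,X) is g-skew-symmetric and commutes with L. -/
theorem aux_comm {R : Type*} [Ring R] (L X : R) (m : ℕ) :
    (∑ j ∈ Finset.range m, L ^ (m - 1 - j) * X * L ^ j) * L
      - L * (∑ j ∈ Finset.range m, L ^ (m - 1 - j) * X * L ^ j) = X * L ^ m - L ^ m * X := by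
  have h := Finset.sum_range_sub (fun j => L ^ (m - j) * X * L ^ j) m
  simp only [Nat.sub_self, pow_zero, one_mul, Nat.sub_zero, mul_one] at h
  rw [← h, Finset.sum_mul, Finset.mul_sum, ← Finset.sum_sub_distrib]
  refine Finset.sum_congr rfl fun j hj => ?_
  have hj' := Finset.mem_range.1 hj
  have e1 : m - j = (m - 1 - j) + 1 := by omega
  have e2 : m - (j + 1) = m - 1 - j := by omega
  rw [e2, e1, pow_succ L j, pow_succ' L (m - 1 - j)]
  simp only [mul_assoc]

theorem aux_skew {V : Type*} [AddCommGroup V] [Module ℝ V]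
    (g : LinearMap.BilinForm ℝ V) (L X : Module.End ℝ V)
    (hL : ∀ u v : V, g (L u) v = g u (L v)) (hX : ∀ u v : V, g (X u) v = - g u (X v))
    (m : ℕ) (u v : V) :
    g ((∑ j ∈ Finset.range m, L ^ (m - 1 - j) * X * L ^ j) u) v =
      - g u ((∑ j ∈ Finset.range m, L ^ (m - 1 - j) * X * L ^ j) v) := by
  have hp : ∀ (k : ℕ) (u v : V), g ((L ^ k) u) v = g u ((L ^ k) v) := by
    intro k
    induction k with
    | zero => intro u v; simp
    | succ k ih =>
      intro u v
      rw [pow_succ, Module.End.mul_apply, ih, hL, ← Module.End.mul_apply, ← pow_succ', pow_succ]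
  conv_rhs => rw [← Finset.sum_range_reflect]
  simp only [LinearMap.sum_apply, map_sum]
  rw [← Finset.sum_neg_distrib]
  refine Finset.sum_congr rfl fun j hj => ?_
  have hj' := Finset.mem_range.1 hj
  have e : m - 1 - (m - 1 - j) = j := by omega
  rw [e]
  simp only [Module.End.mul_apply, hp, hX]

/-- If `L` is `g`-symmetric and `p` is a real polynomial with `p(L) = 0`,
then for every `g`-skew-symmetric endomorphism `X`, the endomorphism `D_p(L,X)` lies in
`𝔤_L`: it is `g`-skew-symmetric and commutes with `L`. -/
theorem stmt2 (V : Type*) [AddCommGroup V] [Module ℝ V] [FiniteDimensional ℝ V]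
    (g : LinearMap.BilinForm ℝ V) (hg_symm : ∀ u v : V, g u v = g v u)
    (hg_nd : g.Nondegenerate)
    (N : ℕ) (a : ℕ → ℝ) (L : Module.End ℝ V)
    (hL : ∀ u v : V, g (L u) v = g u (L v))
    (hpL : ∑ m ∈ Finset.range (N + 1), a m • L ^ m = 0) :
    ∀ X : Module.End ℝ V, (∀ u v : V, g (X u) v = - g u (X v)) →
      (∀ u v : V,
        g ((∑ m ∈ Finset.range (N + 1), a m •
              ∑ j ∈ Finset.range m, L ^ (m - 1 - j) * X * L ^ j) u) v =
        - g u ((∑ m ∈ Finset.range (N + 1), a m •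
              ∑ j ∈ Finset.range m, L ^ (m - 1 - j) * X * L ^ j) v)) ∧
      (∑ m ∈ Finset.range (N + 1), a m •
          ∑ j ∈ Finset.range m, L ^ (m - 1 - j) * X * L ^ j) * L =
        L * (∑ m ∈ Finset.range (N + 1), a m •
          ∑ j ∈ Finset.range m, L ^ (m - 1 - j) * X * L ^ j) := by
  intro X hX
  refine ⟨fun u v => ?_, ?_⟩
  · rw [LinearMap.sum_apply, LinearMap.sum_apply, map_sum, map_sum, LinearMap.sum_apply,
      ← Finset.sum_neg_distrib]
    refine Finset.sum_congr rfl fun m _ => ?_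
    rw [LinearMap.smul_apply, LinearMap.smul_apply, map_smul, map_smul, LinearMap.smul_apply,
      aux_skew g L X hL hX, smul_neg]
  · rw [← sub_eq_zero, Finset.sum_mul, Finset.mul_sum, ← Finset.sum_sub_distrib]
    have h : ∀ m ∈ Finset.range (N + 1),
        (a m • ∑ j ∈ Finset.range m, L ^ (m - 1 - j) * X * L ^ j) * L
          - L * (a m • ∑ j ∈ Finset.range m, L ^ (m - 1 - j) * X * L ^ j)
        = X * (a m • L ^ m) - (a m • L ^ m) * X := by
      intro m _
      rw [smul_mul_assoc, mul_smul_comm, ← smul_sub, aux_comm, smul_sub, mul_smul_comm,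
        smul_mul_assoc]
    rw [Finset.sum_congr rfl h, Finset.sum_sub_distrib, ← Finset.mul_sum, ← Finset.sum_mul, hpL,
      mul_zero, zero_mul, sub_zero]
end

section
/- Let L be a g-symmetric endomorphism of V whose minimal polynomial has degree equal to dim V (i.e. L is a regular operator). Then 𝔤_L = {0}: every g-skew-symmetric endomorphism X of V commuting with L is zero. -/
open Polynomial in
theorem stmt5_cyclic (V : Type*) [AddCommGroup V] [Module ℝ V] [FiniteDimensional ℝ V]
    (L : Module.End ℝ V)
    (hreg : (minpoly ℝ L).natDegree = Module.finrank ℝ V) :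
    ∃ v : V, ∀ w : V, ∃ p : ℝ[X], aeval L p v = w := by
  classical
  have hint : IsIntegral ℝ L := Algebra.IsIntegral.isIntegral L
  have hm0 : minpoly ℝ L ≠ 0 := minpoly.ne_zero hint
  have key : ∃ v : V, ∀ p : ℝ[X], p.degree < (Module.finrank ℝ V : ℕ) →
      aeval L p v = 0 → p = 0 := by
    by_contra! hcon
    let ι := {d : {d : ℝ[X] // d.Monic ∧ d ∣ minpoly ℝ L} // d.1.degree < (Module.finrank ℝ V : ℕ)}
    have : Finite {d : ℝ[X] // d.Monic ∧ d ∣ minpoly ℝ L} :=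
      @Finite.of_fintype _ (fintypeSubtypeMonicDvd _ hm0)
    have hfin : Finite ι := inferInstanceAs (Finite (Subtype _))
    have hcov : ⋃ i : ι, ((LinearMap.ker (aeval L i.1.1) : Submodule ℝ V) : Set V) = Set.univ := by
      refine Set.eq_univ_of_forall fun v => ?_
      obtain ⟨p, hp, hpv, hp0⟩ := hcon v
      let e := EuclideanDomain.gcd p (minpoly ℝ L)
      have he0 : e ≠ 0 := fun h => hp0 (EuclideanDomain.gcd_eq_zero_iff.1 h).1
      have hev : aeval L e v = 0 := by
        change aeval L (EuclideanDomain.gcd p (minpoly ℝ L)) v = 0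
        rw [EuclideanDomain.gcd_eq_gcd_ab, mul_comm p, map_add, map_mul, map_mul, minpoly.aeval]
        simp [hpv]
      have hdeg : e.degree ≤ p.degree := degree_le_of_dvd (EuclideanDomain.gcd_dvd_left _ _) hp0
      refine Set.mem_iUnion.2 ⟨⟨⟨normalize e, monic_normalize he0, ?_⟩, ?_⟩, ?_⟩
      · exact normalize_dvd_iff.2 (EuclideanDomain.gcd_dvd_right _ _)
      · rw [degree_normalize]; exact hdeg.trans_lt hp
      · obtain ⟨c, hc⟩ := dvd_normalize_iff.2 (dvd_refl e)
        simp only [SetLike.mem_coe, LinearMap.mem_ker]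
        rw [hc, mul_comm, map_mul, Module.End.mul_apply, hev, map_zero]
    obtain ⟨i, hi⟩ := Subspace.exists_eq_top_of_iUnion_eq_univ hcov
    have h0 : aeval L i.1.1 = 0 := LinearMap.ker_eq_top.1 hi
    have h1 := minpoly.degree_le_of_ne_zero ℝ L i.1.2.1.ne_zero h0
    have h2 := h1.trans_lt i.2
    rw [degree_eq_natDegree hm0, hreg] at h2
    exact lt_irrefl _ h2
  obtain ⟨v, hv⟩ := key
  refine ⟨v, ?_⟩
  let Φ : degreeLT ℝ (Module.finrank ℝ V) →ₗ[ℝ] V :=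
    ((LinearMap.applyₗ v).comp (aeval L).toLinearMap).comp (Submodule.subtype _)
  have hΦ : ∀ p, Φ p = aeval L p.1 v := fun p => rfl
  have hinj : Function.Injective Φ := by
    rw [injective_iff_map_eq_zero]
    intro p hp
    exact Subtype.ext (hv p.1 (mem_degreeLT.1 p.2) hp)
  have hE := degreeLTEquiv ℝ (Module.finrank ℝ V)
  have : FiniteDimensional ℝ (degreeLT ℝ (Module.finrank ℝ V)) := Module.Finite.equiv hE.symm
  have hfr : Module.finrank ℝ (degreeLT ℝ (Module.finrank ℝ V)) = Module.finrank ℝ V := by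
    rw [hE.finrank_eq]; simp
  have hsurj := (LinearMap.injective_iff_surjective_of_finrank_eq_finrank hfr).1 hinj
  intro w
  obtain ⟨p, hp⟩ := hsurj w
  exact ⟨p.1, hp⟩

/-- If `L` is a `g`-symmetric endomorphism of `V` whose minimal polynomial
has degree `dim V` (i.e. `L` is regular), then `𝔤_L = {0}`: every `g`-skew-symmetric
endomorphism commuting with `L` is zero. -/
theorem stmt5 (V : Type*) [AddCommGroup V] [Module ℝ V] [FiniteDimensional ℝ V]
    (g : LinearMap.BilinForm ℝ V) (hg_symm : ∀ u v : V, g u v = g v u)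
    (hg_nd : g.Nondegenerate)
    (L : Module.End ℝ V)
    (hL : ∀ u v : V, g (L u) v = g u (L v))
    (hreg : (minpoly ℝ L).natDegree = Module.finrank ℝ V) :
    ∀ X : Module.End ℝ V,
      (∀ u v : V, g (X u) v = - g u (X v)) → X * L = L * X → X = 0 := by
  intro X hX hc
  obtain ⟨v, hv⟩ := stmt5_cyclic V L hreg
  have hcomm : ∀ q : Polynomial ℝ, Commute X (Polynomial.aeval L q) := fun q =>
    by
    have h : Commute X L := hc
    exact (Polynomial.aeval_eq_sum_range (p := q) L) ▸ Commute.sum_right _ _ _ fun i _ => (h.pow_right i).smul_right _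
  obtain ⟨p, hp⟩ := hv (X v)
  have hXp : X = Polynomial.aeval L p := by
    ext w
    obtain ⟨q, rfl⟩ := hv w
    have h1 := LinearMap.congr_fun (hcomm q).eq v
    simp only [Module.End.mul_apply] at h1
    rw [h1, ← hp, ← Module.End.mul_apply, ← Module.End.mul_apply, ← map_mul, ← map_mul, mul_comm]
  have hsym : ∀ (q : Polynomial ℝ) (u w : V),
      g (Polynomial.aeval L q u) w = g u (Polynomial.aeval L q w) := by
    intro q
    induction q using Polynomial.induction_on' with
    | add a b ha hb => intro u w; simp [ha, hb]
    | monomial n a =>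
      intro u w
      have : ∀ u w, g ((L ^ n) u) w = g u ((L ^ n) w) := by
        induction n with
        | zero => simp
        | succ n ih => intro u w; rw [pow_succ, Module.End.mul_apply, ih, hL, ← Module.End.mul_apply, ← pow_succ', pow_succ]
      simp [Polynomial.aeval_monomial, this, Module.algebraMap_end_apply]
  ext u
  refine hg_nd.1 _ fun w => ?_
  have h1 := hX u w
  have h2 := hsym p u w
  rw [← hXp] at h2
  linarith
end

section
/- Let 1 ≤ m ≤ n be integers and define the linear map Φ from m×n real matrices to m×n real matrices by Φ(X) = Σ_{j=0}^{n-1} J_m^{n-1-j} X J_n^{j}. Then the image of Φ is exactly the set of m×n matrices M such that M_{i,l} = 0 whenever l − i < n − m, and M_{i,l} = M_{i+1,l+1} whenever 1 ≤ i ≤ m−1 and 1 ≤ l ≤ n−1 (entries are constant along diagonals). In particular, the image of Φ has dimension m. -/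
/-- The `n × n` real nilpotent Jordan block: `(J n) i j = 1` if `j = i + 1`, else `0`
(0-based indices). -/
def JordanBlock (n : ℕ) : Matrix (Fin n) (Fin n) ℝ :=
  Matrix.of fun i j => if (j : ℕ) = (i : ℕ) + 1 then 1 else 0

/-- The linear map `Φ(X) = Σ_{j=0}^{n-1} J_m^{n-1-j} X J_n^j` on `m × n` real matrices. -/
noncomputable def Phi (m n : ℕ) :
    Matrix (Fin m) (Fin n) ℝ →ₗ[ℝ] Matrix (Fin m) (Fin n) ℝ where
  toFun X := ∑ j ∈ Finset.range n, JordanBlock m ^ (n - 1 - j) * X * JordanBlock n ^ j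
  map_add' X Y := by
    simp [Matrix.mul_add, Matrix.add_mul, Finset.sum_add_distrib]
  map_smul' c X := by
    simp [Matrix.mul_smul, Matrix.smul_mul, Finset.smul_sum]

theorem jb_pow (n k : ℕ) (i j : Fin n) :
    (JordanBlock n ^ k) i j = if (j : ℕ) = (i : ℕ) + k then 1 else 0 := by
  induction k generalizing i j with
  | zero => simp [Matrix.one_apply, Fin.ext_iff, eq_comm]
  | succ k ih =>
    rw [pow_succ, Matrix.mul_apply]
    simp only [ih]
    simp only [JordanBlock, Matrix.of_apply]
    by_cases h : (i : ℕ) + k < n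
    · rw [Finset.sum_eq_single (⟨i + k, h⟩ : Fin n)]
      · simp [add_assoc]
      · intro b _ hb
        rw [if_neg (fun h' => hb (Fin.ext h')), zero_mul]
      · simp
    · rw [Finset.sum_eq_zero, if_neg]
      · have := j.2
        omega
      · intro b _
        have := b.2
        rw [if_neg (by omega), zero_mul]

theorem phi_term (m n k j : ℕ) (X : Matrix (Fin m) (Fin n) ℝ) (i : Fin m) (l : Fin n) :
    (JordanBlock m ^ k * X * JordanBlock n ^ j) i l =
      if h : (i : ℕ) + k < m ∧ j ≤ (l : ℕ) then
        X ⟨i + k, h.1⟩ ⟨l - j, by have := l.2; omega⟩ else 0 := by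
  simp only [Matrix.mul_apply, jb_pow]
  split_ifs with h
  · rw [Finset.sum_eq_single (⟨l - j, by have := l.2; omega⟩ : Fin n)]
    · rw [Finset.sum_eq_single (⟨i + k, h.1⟩ : Fin m)]
      · have : (l : ℕ) = l - j + j := by omega
        simp [← this]
      · intro b _ hb
        rw [if_neg (fun h' => hb (Fin.ext h')), zero_mul]
      · simp
    · intro b _ hb
      rw [if_neg (fun h' => hb (Fin.ext (by simp; omega))), mul_zero]
    · simp
  · apply Finset.sum_eq_zero
    intro b _
    by_cases h1 : (l : ℕ) = b + j
    · rw [Finset.sum_eq_zero, zero_mul]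
      intro c _
      have := c.2
      rw [if_neg (by omega), zero_mul]
    · rw [if_neg h1, mul_zero]

theorem phi_apply (m n : ℕ) (X : Matrix (Fin m) (Fin n) ℝ) (i : Fin m) (l : Fin n) :
    Phi m n X i l = ∑ j ∈ Finset.range n,
      if h : (i : ℕ) + (n - 1 - j) < m ∧ j ≤ (l : ℕ) then
        X ⟨i + (n - 1 - j), h.1⟩ ⟨l - j, by have := l.2; omega⟩ else 0 := by
  simp only [← phi_term]
  simp [Phi, Matrix.sum_apply]

/-- Put a vector in the first column. -/
def colMap (m n : ℕ) : (Fin m → ℝ) →ₗ[ℝ] Matrix (Fin m) (Fin n) ℝ where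
  toFun c := Matrix.of fun a b => if (b : ℕ) = 0 then c a else 0
  map_add' x y := by
    ext a b
    by_cases h : (b : ℕ) = 0 <;> simp [h]
  map_smul' r x := by
    ext a b
    by_cases h : (b : ℕ) = 0 <;> simp [h]

theorem phi_col (m n : ℕ) (c : Fin m → ℝ) (i : Fin m) (l : Fin n) :
    Phi m n (colMap m n c) i l =
      if h : (i : ℕ) + (n - 1 - l) < m then c ⟨i + (n - 1 - l), h⟩ else 0 := by
  rw [phi_apply, Finset.sum_eq_single (l : ℕ)]
  · simp [colMap]
  · intro b _ hb
    split_ifs with h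
    · simp only [colMap, LinearMap.coe_mk, AddHom.coe_mk, Matrix.of_apply]
      rw [if_neg (by omega)]
    · rfl
  · simp

theorem diag_const (m n : ℕ) (M : Matrix (Fin m) (Fin n) ℝ)
    (hM : ∀ (i : Fin m) (l : Fin n) (hi : (i : ℕ) + 1 < m) (hl : (l : ℕ) + 1 < n),
              M i l = M ⟨(i : ℕ) + 1, hi⟩ ⟨(l : ℕ) + 1, hl⟩) (d : ℕ) :
    ∀ (i : ℕ) (hi : i < m) (hl : d + i < n),
      M ⟨i, hi⟩ ⟨d + i, hl⟩ = M ⟨0, by omega⟩ ⟨d, by omega⟩ := by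
  intro i
  induction i with
  | zero => intro _ _; rfl
  | succ k ih =>
    intro hi hl
    rw [← ih (by omega) (by omega)]
    exact (hM ⟨k, by omega⟩ ⟨d + k, by omega⟩ hi hl).symm

theorem phi_mem (m n : ℕ) (hmn : m ≤ n) (X : Matrix (Fin m) (Fin n) ℝ) :
    (∀ (i : Fin m) (l : Fin n), (l : ℤ) - (i : ℤ) < (n : ℤ) - (m : ℤ) → Phi m n X i l = 0) ∧
           (∀ (i : Fin m) (l : Fin n) (hi : (i : ℕ) + 1 < m) (hl : (l : ℕ) + 1 < n),
              Phi m n X i l = Phi m n X ⟨(i : ℕ) + 1, hi⟩ ⟨(l : ℕ) + 1, hl⟩) := by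
  constructor
  · intro i l h
    rw [phi_apply]
    apply Finset.sum_eq_zero
    intro j hj
    rw [dif_neg]
    have := Finset.mem_range.1 hj
    omega
  · intro i l hi hl
    rw [phi_apply, phi_apply]
    obtain ⟨p, rfl⟩ : ∃ p, n = p + 1 := ⟨n - 1, by omega⟩
    rw [Finset.sum_range_succ, Finset.sum_range_succ']
    rw [dif_neg (by omega), dif_neg (by simp; omega)]
    congr 1
    apply Finset.sum_congr rfl
    intro j hj
    have := Finset.mem_range.1 hj
    by_cases h : (i : ℕ) + (p + 1 - 1 - j) < m ∧ j ≤ (l : ℕ)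
    · rw [dif_pos h, dif_pos (by simp; omega)]
      congr 1 <;> simp [Fin.ext_iff] <;> omega
    · rw [dif_neg h, dif_neg (by simp; omega)]

theorem mem_phi (m n : ℕ) (hmn : m ≤ n) (M : Matrix (Fin m) (Fin n) ℝ)
    (h0 : ∀ (i : Fin m) (l : Fin n), (l : ℤ) - (i : ℤ) < (n : ℤ) - (m : ℤ) → M i l = 0)
    (hM : ∀ (i : Fin m) (l : Fin n) (hi : (i : ℕ) + 1 < m) (hl : (l : ℕ) + 1 < n),
              M i l = M ⟨(i : ℕ) + 1, hi⟩ ⟨(l : ℕ) + 1, hl⟩) :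
    ∃ c, Phi m n (colMap m n c) = M := by
  refine ⟨fun a => M ⟨0, by have := a.2; omega⟩ ⟨n - 1 - a, by have := a.2; omega⟩, ?_⟩
  ext i l
  have h1 := i.2
  have h2 := l.2
  rw [phi_col]
  split_ifs with h
  · have := diag_const m n M hM (l - i) i i.2 (by omega)
    have e : (⟨l - i + i, by omega⟩ : Fin n) = l := Fin.ext (by simp; omega)
    rw [e] at this
    rw [this]
    congr 1
    simp only [Fin.ext_iff]
    omega
  · exact (h0 i l (by omega)).symm

/-- For `1 ≤ m ≤ n`, the image of `Φ` is exactly the set of `m × n`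
matrices `M` with `M i l = 0` whenever `l - i < n - m`, and whose entries are constant
along diagonals; in particular the image of `Φ` has dimension `m`. -/
theorem stmt6 (m n : ℕ) (hm : 1 ≤ m) (hmn : m ≤ n) :
    (LinearMap.range (Phi m n) : Set (Matrix (Fin m) (Fin n) ℝ)) =
      {M | (∀ (i : Fin m) (l : Fin n), (l : ℤ) - (i : ℤ) < (n : ℤ) - (m : ℤ) → M i l = 0) ∧
           (∀ (i : Fin m) (l : Fin n) (hi : (i : ℕ) + 1 < m) (hl : (l : ℕ) + 1 < n),
              M i l = M ⟨(i : ℕ) + 1, hi⟩ ⟨(l : ℕ) + 1, hl⟩)} ∧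
    Module.finrank ℝ (LinearMap.range (Phi m n)) = m := by
  constructor
  · ext M
    constructor
    · rintro ⟨X, rfl⟩
      exact phi_mem m n hmn X
    · rintro ⟨h0, hM⟩
      obtain ⟨c, hc⟩ := mem_phi m n hmn M h0 hM
      exact ⟨_, hc⟩
  · have hr : LinearMap.range (Phi m n) = LinearMap.range (Phi m n ∘ₗ colMap m n) := by
      apply le_antisymm
      · rintro _ ⟨X, rfl⟩
        obtain ⟨h0, hM⟩ := phi_mem m n hmn X
        obtain ⟨c, hc⟩ := mem_phi m n hmn _ h0 hM
        exact ⟨c, hc⟩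
      · exact LinearMap.range_comp_le_range _ _
    have hi : Function.Injective (Phi m n ∘ₗ colMap m n) := by
      intro c d hcd
      ext a
      have ha := a.2
      have key : ∀ c, (Phi m n ∘ₗ colMap m n) c ⟨0, by omega⟩ ⟨n - 1 - a, by omega⟩ = c a := by
        intro c
        rw [LinearMap.comp_apply, phi_col, dif_pos (by simp; omega)]
        congr 1
        simp only [Fin.ext_iff]
        omega
      rw [← key c, ← key d, hcd]
    rw [hr, LinearMap.finrank_range_of_inj hi]
    simp
end

section
/- Let 1 ≤ m ≤ n, let V = ℝ^{m+n}, let L be the block-diagonal matrix diag(J_m, J_n), and let g be the symmetric bilinear form on V whose matrix is block-diagonal diag(ε₁S_m, ε₂S_n) with ε₁, ε₂ ∈ {1, −1}. Then L is g-symmetric, g is nondegenerate, and the linear map R(X) = Σ_{j=0}^{n-1} L^{n-1-j} X L^{j}, restricted to g-skew-symmetric matrices X, has image exactly equal to 𝔤_L = {Y : Y is g-skew-symmetric and YL = LY}. In particular, 𝔤_L is a Berger algebra. -/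
open Matrix

/-- The `n × n` antidiagonal matrix `S n` with ones on the antidiagonal
(0-based: `(S n) i j = 1` iff `i + j + 1 = n`). -/
def AntiDiag (n : ℕ) : Matrix (Fin n) (Fin n) ℝ :=
  Matrix.of fun i j => if (i : ℕ) + (j : ℕ) + 1 = n then 1 else 0

/-- A formal curvature tensor on `ι → ℝ` with values given by matrices:
an alternating bilinear map into `End(ι → ℝ) ≃` matrices, satisfying the
Bianchi identity. -/
def IsFormalCurvatureMat {ι : Type*} [Fintype ι]
    (R : (ι → ℝ) → (ι → ℝ) → Matrix ι ι ℝ) : Prop :=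
  (∀ u u' v : ι → ℝ, R (u + u') v = R u v + R u' v) ∧
  (∀ (c : ℝ) (u v : ι → ℝ), R (c • u) v = c • R u v) ∧
  (∀ u v v' : ι → ℝ, R u (v + v') = R u v + R u v') ∧
  (∀ (c : ℝ) (u v : ι → ℝ), R u (c • v) = c • R u v) ∧
  (∀ u : ι → ℝ, R u u = 0) ∧
  (∀ u v w : ι → ℝ, R u v *ᵥ w + R v w *ᵥ u + R w u *ᵥ v = 0)

/-- A set `h` of matrices (viewed as endomorphisms of `ι → ℝ`) is a Berger algebra
if it is spanned, as a vector space, by the values of all formal curvature tensors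
whose values lie in `h`. -/
def IsBergerMat {ι : Type*} [Fintype ι] (h : Set (Matrix ι ι ℝ)) : Prop :=
  (Submodule.span ℝ {A : Matrix ι ι ℝ |
      ∃ R, IsFormalCurvatureMat R ∧ (∀ u v, R u v ∈ h) ∧ ∃ u v, R u v = A} :
    Set (Matrix ι ι ℝ)) = h

namespace Stmt7Aux

lemma jb_pow (n k : ℕ) (i j : Fin n) :
    (JordanBlock n ^ k) i j = if (j : ℕ) = (i : ℕ) + k then 1 else 0 := by
  induction k generalizing i j with
  | zero => simp [Matrix.one_apply, Fin.ext_iff, eq_comm]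
  | succ k ih =>
    rw [pow_succ, Matrix.mul_apply]
    simp only [ih]
    simp only [JordanBlock, Matrix.of_apply]
    by_cases h : (j : ℕ) = i + (k + 1)
    · rw [if_pos h, Finset.sum_eq_single (⟨i + k, by omega⟩ : Fin n)]
      · simp; omega
      · intro b _ hb
        have : (b : ℕ) ≠ i + k := fun h' => hb (Fin.ext h')
        simp [this]
      · simp
    · rw [if_neg h]
      apply Finset.sum_eq_zero
      intro b _
      by_cases h1 : (b : ℕ) = i + k
      · have : ¬ ((j : ℕ) = b + 1) := by omega
        simp [this]
      · simp [h1]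

lemma jb_pow_zero (m n : ℕ) (h : m ≤ n) : JordanBlock m ^ n = 0 := by
  ext i j
  rw [jb_pow, if_neg (by omega)]
  rfl

lemma ad_eq (n : ℕ) (i j : Fin n) : AntiDiag n i j = if j = i.rev then 1 else 0 := by
  have : ((i : ℕ) + j + 1 = n) ↔ j = i.rev := by
    rw [Fin.ext_iff, Fin.val_rev]; omega
  simp [AntiDiag, this]

lemma ad_mul {κ : Type*} (n : ℕ) (A : Matrix (Fin n) κ ℝ) (i : Fin n) (j : κ) :
    (AntiDiag n * A) i j = A i.rev j := by
  simp [Matrix.mul_apply, ad_eq]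

lemma ad_transpose (n : ℕ) : (AntiDiag n)ᵀ = AntiDiag n := by
  ext i j
  simp only [Matrix.transpose_apply, AntiDiag, Matrix.of_apply, add_comm (j : ℕ)]

lemma mul_ad (n : ℕ) (A : Matrix (Fin n) (Fin n) ℝ) (i j : Fin n) :
    (A * AntiDiag n) i j = A i j.rev := by
  have := ad_mul n Aᵀ j i
  rw [← Matrix.transpose_apply (AntiDiag n * Aᵀ), Matrix.transpose_mul, ad_transpose] at this
  simpa using this

lemma ad_sq (n : ℕ) : AntiDiag n * AntiDiag n = 1 := by
  ext i j
  rw [ad_mul, ad_eq, Fin.rev_rev, Matrix.one_apply]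
  simp [eq_comm]

lemma ad_jb (n : ℕ) : (JordanBlock n)ᵀ * AntiDiag n = AntiDiag n * JordanBlock n := by
  ext i j
  rw [mul_ad, ad_mul]
  simp only [JordanBlock, Matrix.transpose_apply, Matrix.of_apply, Fin.val_rev]
  congr 1
  apply propext
  omega

/-- The elementary matrix with a one at the lower left corner. -/
def cornerT (n : ℕ) : Matrix (Fin n) (Fin n) ℝ :=
  Matrix.of fun i j => if (i : ℕ) + 1 = n ∧ (j : ℕ) = 0 then 1 else 0

lemma corner_ad (n : ℕ) : (cornerT n)ᵀ * AntiDiag n = AntiDiag n * cornerT n := by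
  ext i j
  rw [mul_ad, ad_mul]
  simp only [cornerT, Matrix.transpose_apply, Matrix.of_apply, Fin.val_rev]
  congr 1
  apply propext
  omega

lemma corner_term (n t : ℕ) (ht : t < n) (i j : Fin n) :
    (JordanBlock n ^ (n - 1 - t) * cornerT n * JordanBlock n ^ t) i j =
      if (i : ℕ) = t ∧ (j : ℕ) = t then 1 else 0 := by
  have h1 : ∀ b : Fin n, (JordanBlock n ^ (n - 1 - t) * cornerT n) i b =
      if (i : ℕ) = t ∧ (b : ℕ) = 0 then 1 else 0 := by
    intro b
    rw [Matrix.mul_apply, Finset.sum_eq_single (⟨n - 1, by omega⟩ : Fin n)]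
    · rw [jb_pow]
      simp only [cornerT, Matrix.of_apply]
      have e1 : (n - 1 = (i : ℕ) + (n - 1 - t)) ↔ (i : ℕ) = t := by omega
      have e2 : n - 1 + 1 = n := by omega
      simp only [e1, e2, true_and]
      by_cases h1 : (i : ℕ) = t <;> by_cases h2 : (b : ℕ) = 0 <;> simp only [h1, h2] <;> simp
    · intro c _ hc
      have : ¬ ((c : ℕ) + 1 = n) := fun h' => hc (Fin.ext (by simp; omega))
      simp [cornerT, this]
    · simp
  rw [Matrix.mul_apply, Finset.sum_eq_single (⟨0, by omega⟩ : Fin n)]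
  · rw [h1, jb_pow]
    simp only [zero_add, and_true]
    by_cases h1 : (i : ℕ) = t <;> by_cases h2 : (j : ℕ) = t <;> simp [h1, h2]
  · intro c _ hc
    have : ¬ ((c : ℕ) = 0) := fun h' => hc (Fin.ext h')
    rw [h1]
    simp [this]
  · simp

lemma corner_sum (n : ℕ) :
    ∑ t ∈ Finset.range n, JordanBlock n ^ (n - 1 - t) * cornerT n * JordanBlock n ^ t = 1 := by
  ext i j
  rw [Matrix.sum_apply, Finset.sum_congr rfl
    (fun t ht => corner_term n t (Finset.mem_range.1 ht) i j), Matrix.one_apply]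
  by_cases h : i = j
  · subst h
    simp
  · rw [if_neg h]
    apply Finset.sum_eq_zero
    intro t _
    rw [if_neg]
    rintro ⟨h1, h2⟩
    exact h (Fin.ext (h1.trans h2.symm))

lemma jb_mul (n : ℕ) (A : Matrix (Fin n) (Fin n) ℝ) (i j : Fin n) (h : (j : ℕ) + 1 < n) :
    (A * JordanBlock n) i ⟨j + 1, h⟩ = A i j := by
  rw [Matrix.mul_apply, Finset.sum_eq_single j]
  · simp [JordanBlock]
  · intro c _ hc
    have : ¬ ((j : ℕ) = c) := fun h' => hc (Fin.ext h'.symm)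
    simp [JordanBlock, this]
  · simp

/-- A skew matrix commuting with the Jordan block vanishes. -/
lemma skew_comm_zero (n : ℕ) (A : Matrix (Fin n) (Fin n) ℝ)
    (hs : Aᵀ * AntiDiag n = -(AntiDiag n * A))
    (hc : A * JordanBlock n = JordanBlock n * A) : A = 0 := by
  set B := AntiDiag n * A with hB
  have hBt : Bᵀ = -B := by rw [hB, Matrix.transpose_mul, ad_transpose, hs]
  have hBJ : B * JordanBlock n = (JordanBlock n)ᵀ * B := by
    rw [hB, Matrix.mul_assoc, hc, ← Matrix.mul_assoc, ← Matrix.mul_assoc, ad_jb]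
  have step : ∀ (i j : ℕ) (hi : i + 1 < n) (hj : j + 1 < n),
      B ⟨i, by omega⟩ ⟨j + 1, hj⟩ = B ⟨i + 1, hi⟩ ⟨j, by omega⟩ := by
    intro i j hi hj
    have h1 := jb_mul n B ⟨i + 1, hi⟩ ⟨j, by omega⟩ hj
    have h2 := jb_mul n Bᵀ ⟨j + 1, hj⟩ ⟨i, by omega⟩ hi
    rw [← h1, hBJ, ← Matrix.transpose_apply ((JordanBlock n)ᵀ * B), Matrix.transpose_mul,
      Matrix.transpose_transpose, h2, Matrix.transpose_apply]
  have hank : ∀ (k i j : ℕ) (hi : i + k < n) (hj : j + k < n),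
      B ⟨i, by omega⟩ ⟨j + k, hj⟩ = B ⟨i + k, hi⟩ ⟨j, by omega⟩ := by
    intro k
    induction k with
    | zero => intro i j hi hj; rfl
    | succ k ih =>
      intro i j hi hj
      have h1 := step i (j + k) (by omega) hj
      have h2 := ih (i + 1) j (by omega) (by omega)
      have e : (⟨i + 1 + k, by omega⟩ : Fin n) = ⟨i + (k + 1), hi⟩ := Fin.ext (by simp; omega)
      rw [e] at h2
      exact h1.trans h2
  have anti : ∀ i j, B j i = - B i j := fun i j => by
    have := congrFun (congrFun hBt i) j
    simpa using this
  have le0 : ∀ i j : Fin n, i ≤ j → B i j = 0 := by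
    intro i j hij
    have hij' : (i : ℕ) ≤ j := hij
    have h1 := hank (j - i) i i (by omega) (by omega)
    have e : (⟨i + (j - i), by omega⟩ : Fin n) = j := Fin.ext (by simp; omega)
    rw [e] at h1
    have h2 := anti i j
    simp only [Fin.eta] at h1
    linarith
  have hB0 : B = 0 := by
    ext i j
    rcases le_total i j with h | h
    · exact le0 i j h
    · rw [anti j i, le0 j i h]; simp
  calc A = AntiDiag n * B := by rw [hB, ← Matrix.mul_assoc, ad_sq, Matrix.one_mul]
    _ = 0 := by rw [hB0, Matrix.mul_zero]

section general
variable {ι : Type*} [Fintype ι] [DecidableEq ι]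

lemma bil_iff (A B : Matrix ι ι ℝ) :
    (∀ u v : ι → ℝ, u ⬝ᵥ (A *ᵥ v) = u ⬝ᵥ (B *ᵥ v)) ↔ A = B := by
  constructor
  · intro h
    ext i j
    have := h (Pi.single i 1) (Pi.single j 1)
    simpa using this
  · rintro rfl u v; rfl

lemma form_left (X G : Matrix ι ι ℝ) (u v : ι → ℝ) :
    (X *ᵥ u) ⬝ᵥ (G *ᵥ v) = u ⬝ᵥ ((Xᵀ * G) *ᵥ v) := by
  rw [← Matrix.mulVec_mulVec, Matrix.dotProduct_mulVec u, Matrix.vecMul_transpose]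

lemma skew_iff (X G : Matrix ι ι ℝ) :
    (∀ u v : ι → ℝ, (X *ᵥ u) ⬝ᵥ (G *ᵥ v) = - u ⬝ᵥ (G *ᵥ (X *ᵥ v))) ↔
      Xᵀ * G = -(G * X) := by
  rw [← bil_iff]
  simp only [form_left, Matrix.mulVec_mulVec, Matrix.neg_mulVec, neg_dotProduct, dotProduct_neg]

/-- The sum operator. -/
def Rop (L : Matrix ι ι ℝ) (n : ℕ) : Matrix ι ι ℝ →ₗ[ℝ] Matrix ι ι ℝ where
  toFun X := ∑ j ∈ Finset.range n, L ^ (n - 1 - j) * X * L ^ j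
  map_add' X Y := by simp [Matrix.mul_add, Matrix.add_mul, Finset.sum_add_distrib]
  map_smul' c X := by simp [Finset.smul_sum]

lemma Rop_apply (L : Matrix ι ι ℝ) (n : ℕ) (X : Matrix ι ι ℝ) :
    Rop L n X = ∑ j ∈ Finset.range n, L ^ (n - 1 - j) * X * L ^ j := rfl

lemma pow_sym (L G : Matrix ι ι ℝ) (h : Lᵀ * G = G * L) (k : ℕ) :
    (L ^ k)ᵀ * G = G * L ^ k := by
  induction k with
  | zero => simp
  | succ k ih =>
    rw [pow_succ, Matrix.transpose_mul, Matrix.mul_assoc, ih, ← Matrix.mul_assoc, h,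
      Matrix.mul_assoc, ← pow_succ', ← pow_succ]

lemma Rop_skew (L G : Matrix ι ι ℝ) (n : ℕ) (h : Lᵀ * G = G * L) (X : Matrix ι ι ℝ)
    (hX : Xᵀ * G = -(G * X)) : (Rop L n X)ᵀ * G = -(G * Rop L n X) := by
  rw [Rop_apply, Matrix.transpose_sum, Finset.sum_mul, Finset.mul_sum, ← Finset.sum_neg_distrib,
    ← Finset.sum_range_reflect]
  apply Finset.sum_congr rfl
  intro j hj
  have hj' := Finset.mem_range.1 hj
  have e : n - 1 - (n - 1 - j) = j := by omega
  rw [e, Matrix.transpose_mul, Matrix.transpose_mul]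
  calc (L ^ (n - 1 - j))ᵀ * (Xᵀ * (L ^ j)ᵀ) * G
      = (L ^ (n - 1 - j))ᵀ * (Xᵀ * ((L ^ j)ᵀ * G)) := by simp only [Matrix.mul_assoc]
    _ = (L ^ (n - 1 - j))ᵀ * ((Xᵀ * G) * L ^ j) := by
        rw [pow_sym L G h]; simp only [Matrix.mul_assoc]
    _ = -(((L ^ (n - 1 - j))ᵀ * G) * X * L ^ j) := by
        rw [hX]; simp only [Matrix.mul_assoc, Matrix.neg_mul, Matrix.mul_neg]
    _ = _ := by rw [pow_sym L G h]; simp only [Matrix.mul_assoc]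

lemma Rop_comm (L : Matrix ι ι ℝ) (n : ℕ) (h : L ^ n = 0) (X : Matrix ι ι ℝ) :
    Rop L n X * L = L * Rop L n X := by
  have key := Finset.sum_range_sub (fun j => L ^ (n - j) * X * L ^ j) n
  simp only [Nat.sub_self, pow_zero, Nat.sub_zero, h, Matrix.mul_zero, Matrix.zero_mul,
    sub_zero] at key
  rw [← sub_eq_zero, Rop_apply, Finset.sum_mul, Finset.mul_sum, ← Finset.sum_sub_distrib, ← key]
  apply Finset.sum_congr rfl
  intro j hj
  have hj' := Finset.mem_range.1 hj
  have e1 : n - (j + 1) = n - 1 - j := by omega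
  have e2 : n - j = (n - 1 - j) + 1 := by omega
  rw [e1, e2, pow_succ L j, pow_succ' L (n - 1 - j)]
  simp only [Matrix.mul_assoc]

lemma Rop_mul_left (L Y T : Matrix ι ι ℝ) (n : ℕ) (h : Y * L = L * Y) :
    Rop L n (Y * T) = Y * Rop L n T := by
  rw [Rop_apply, Rop_apply, Finset.mul_sum]
  apply Finset.sum_congr rfl
  intro j _
  have hc : Commute Y (L ^ (n - 1 - j)) := Commute.pow_right h _
  rw [← Matrix.mul_assoc, ← hc.eq]
  simp only [Matrix.mul_assoc]

lemma Rop_mul_right (L Y T : Matrix ι ι ℝ) (n : ℕ) (h : Y * L = L * Y) :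
    Rop L n (T * Y) = Rop L n T * Y := by
  rw [Rop_apply, Rop_apply, Finset.sum_mul]
  apply Finset.sum_congr rfl
  intro j _
  have hc : Commute Y (L ^ j) := Commute.pow_right h _
  simp only [Matrix.mul_assoc]
  rw [hc.eq]

/-- The centraliser as a submodule. -/
def gL (L G : Matrix ι ι ℝ) : Submodule ℝ (Matrix ι ι ℝ) where
  carrier := {Y | Yᵀ * G = -(G * Y) ∧ Y * L = L * Y}
  add_mem' := by
    rintro a b ⟨h1, h2⟩ ⟨h3, h4⟩
    refine ⟨?_, ?_⟩
    · rw [Matrix.transpose_add, Matrix.add_mul, h1, h3, Matrix.mul_add, neg_add]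
    · rw [Matrix.add_mul, Matrix.mul_add, h2, h4]
  zero_mem' := by simp
  smul_mem' := by
    rintro c a ⟨h1, h2⟩
    refine ⟨?_, ?_⟩
    · rw [Matrix.transpose_smul, Matrix.smul_mul, h1, Matrix.mul_smul, smul_neg]
    · rw [Matrix.smul_mul, Matrix.mul_smul, h2]

/-- The wedge `u ∧ v`, a skew matrix. -/
def wedge (G : Matrix ι ι ℝ) (u v : ι → ℝ) : Matrix ι ι ℝ :=
  (vecMulVec v u - vecMulVec u v) * G

lemma wedge_add_left (G : Matrix ι ι ℝ) (u u' v : ι → ℝ) :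
    wedge G (u + u') v = wedge G u v + wedge G u' v := by
  simp only [wedge, Matrix.vecMulVec_add, Matrix.add_vecMulVec, ← Matrix.add_mul]
  congr 1
  abel

lemma wedge_add_right (G : Matrix ι ι ℝ) (u v v' : ι → ℝ) :
    wedge G u (v + v') = wedge G u v + wedge G u v' := by
  simp only [wedge, Matrix.vecMulVec_add, Matrix.add_vecMulVec, ← Matrix.add_mul]
  congr 1
  abel

lemma wedge_smul_left (G : Matrix ι ι ℝ) (c : ℝ) (u v : ι → ℝ) :
    wedge G (c • u) v = c • wedge G u v := by
  simp only [wedge, Matrix.vecMulVec_smul, Matrix.smul_vecMulVec, ← smul_sub, Matrix.smul_mul]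

lemma wedge_smul_right (G : Matrix ι ι ℝ) (c : ℝ) (u v : ι → ℝ) :
    wedge G u (c • v) = c • wedge G u v := by
  simp only [wedge, Matrix.vecMulVec_smul, Matrix.smul_vecMulVec, ← smul_sub, Matrix.smul_mul]

lemma wedge_skew (G : Matrix ι ι ℝ) (hG : Gᵀ = G) (u v : ι → ℝ) :
    (wedge G u v)ᵀ * G = -(G * wedge G u v) := by
  simp only [wedge, Matrix.transpose_mul, Matrix.transpose_sub, Matrix.transpose_vecMulVec, hG]
  simp only [Matrix.mul_sub, Matrix.sub_mul, Matrix.mul_assoc]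
  abel

lemma term_mulVec (L G : Matrix ι ι ℝ) (a b : ℕ) (u v w : ι → ℝ) :
    (L ^ a * wedge G u v * L ^ b) *ᵥ w =
      (u ⬝ᵥ ((G * L ^ b) *ᵥ w)) • (L ^ a *ᵥ v) - (v ⬝ᵥ ((G * L ^ b) *ᵥ w)) • (L ^ a *ᵥ u) := by
  simp only [wedge, ← Matrix.mulVec_mulVec, Matrix.sub_mulVec, Matrix.vecMulVec_mulVec,
    Matrix.mulVec_sub, Matrix.mulVec_smul, op_smul_eq_smul]

lemma sym_form (M : Matrix ι ι ℝ) (hM : Mᵀ = M) (u v : ι → ℝ) :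
    u ⬝ᵥ (M *ᵥ v) = v ⬝ᵥ (M *ᵥ u) := by
  rw [Matrix.dotProduct_mulVec, ← Matrix.mulVec_transpose, hM, dotProduct_comm]

lemma curv (L G : Matrix ι ι ℝ) (n : ℕ) (hG : Gᵀ = G) (hL : Lᵀ * G = G * L) :
    IsFormalCurvatureMat (fun u v => Rop L n (wedge G u v)) := by
  have hs : ∀ k, (G * L ^ k)ᵀ = G * L ^ k := fun k => by
    rw [Matrix.transpose_mul, hG, pow_sym L G hL]
  refine ⟨?_, ?_, ?_, ?_, ?_, ?_⟩
  · intro u u' v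
    simp only [wedge_add_left, map_add]
  · intro c u v
    simp only [wedge_smul_left, map_smul]
  · intro u v v'
    simp only [wedge_add_right, map_add]
  · intro c u v
    simp only [wedge_smul_right, map_smul]
  · intro u
    simp [wedge]
  · intro u v w
    simp only [Rop_apply, Matrix.sum_mulVec, ← Finset.sum_add_distrib]
    apply Finset.sum_eq_zero
    intro j _
    simp only [term_mulVec]
    rw [sym_form _ (hs j) v w, sym_form _ (hs j) w u, sym_form _ (hs j) v u]
    abel

lemma skew_decomp (G X : Matrix ι ι ℝ) (hG : Gᵀ = G) (hGG : G * G = 1)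
    (hX : Xᵀ * G = -(G * X)) :
    X = ∑ i, ∑ j, ((X * G) i j / 2) • wedge G (Pi.single j 1) (Pi.single i 1) := by
  set A := X * G with hA
  have hAt : Aᵀ = -A := by
    have h1 : G * (Xᵀ * G) * G = -(X * G) := by
      rw [hX]
      simp only [Matrix.mul_neg, Matrix.neg_mul]
      rw [← Matrix.mul_assoc G G X, hGG, Matrix.one_mul]
    rw [hA, Matrix.transpose_mul, hG, ← h1, Matrix.mul_assoc, Matrix.mul_assoc, hGG,
      Matrix.mul_one]
  have hXA : X = A * G := by rw [hA, Matrix.mul_assoc, hGG, Matrix.mul_one]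
  have hsum : A = ∑ i, ∑ j, (A i j / 2) •
      (vecMulVec (Pi.single i (1:ℝ)) (Pi.single j (1:ℝ)) -
        vecMulVec (Pi.single j (1:ℝ)) (Pi.single i (1:ℝ))) := by
    have h1 := Matrix.matrix_eq_sum_single A
    have h2 := Matrix.matrix_eq_sum_single Aᵀ
    have h3 : A = (1 / 2 : ℝ) • (A - Aᵀ) := by
      rw [hAt, sub_neg_eq_add, ← two_smul ℝ A, smul_smul]; norm_num
    have h4 : ∀ i j : ι, vecMulVec (Pi.single i (1:ℝ)) (Pi.single j (1:ℝ)) =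
        Matrix.single i j (1:ℝ) := fun i j => by
      ext a b
      simp only [vecMulVec_apply, Matrix.single_apply, Pi.single_apply]
      by_cases h1 : a = i <;> by_cases h2 : b = j <;> simp [h1, h2, Ne.symm]
    have h5 : ∀ i j : ι, (A i j / 2) • (Matrix.single i j (1:ℝ) - Matrix.single j i (1:ℝ)) =
        (1 / 2 : ℝ) • (Matrix.single i j (A i j) - Matrix.single j i (A i j)) := fun i j => by
      simp only [smul_sub, Matrix.smul_single, smul_eq_mul]
      congr 2 <;> ring
    simp only [h4, h5, ← Finset.smul_sum, Finset.sum_sub_distrib]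
    rw [Finset.sum_comm (f := fun i j => Matrix.single j i (A i j))]
    simp only [Matrix.transpose_apply] at h2
    rw [← h1, ← h2]
    exact h3
  calc X = A * G := hXA
    _ = (∑ i, ∑ j, (A i j / 2) •
      (vecMulVec (Pi.single i (1:ℝ)) (Pi.single j (1:ℝ)) -
        vecMulVec (Pi.single j (1:ℝ)) (Pi.single i (1:ℝ)))) * G := by rw [← hsum]
    _ = _ := by simp only [Finset.sum_mul, Matrix.smul_mul, wedge]

end general

end Stmt7Aux

open Stmt7Aux in
/-- For `1 ≤ m ≤ n`, `L = diag(J_m, J_n)` and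
`g` the bilinear form with matrix `G = diag(ε₁ S_m, ε₂ S_n)`, `ε₁, ε₂ ∈ {1, -1}`:
`L` is `g`-symmetric, `g` is nondegenerate, the map `R(X) = Σ_{j=0}^{n-1} L^{n-1-j} X L^j`
restricted to `g`-skew-symmetric matrices has image exactly
`𝔤_L = {Y : Y g-skew-symmetric, YL = LY}`, and `𝔤_L` is a Berger algebra. -/
theorem stmt7 (m n : ℕ) (hm : 1 ≤ m) (hmn : m ≤ n) (ε₁ ε₂ : ℝ)
    (hε₁ : ε₁ = 1 ∨ ε₁ = -1) (hε₂ : ε₂ = 1 ∨ ε₂ = -1)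
    (L G : Matrix (Fin m ⊕ Fin n) (Fin m ⊕ Fin n) ℝ)
    (hLdef : L = Matrix.fromBlocks (JordanBlock m) 0 0 (JordanBlock n))
    (hGdef : G = Matrix.fromBlocks (ε₁ • AntiDiag m) 0 0 (ε₂ • AntiDiag n)) :
    -- `L` is `g`-symmetric
    (∀ u v : Fin m ⊕ Fin n → ℝ, (L *ᵥ u) ⬝ᵥ (G *ᵥ v) = u ⬝ᵥ (G *ᵥ (L *ᵥ v))) ∧
    -- `g` is nondegenerate
    (∀ u : Fin m ⊕ Fin n → ℝ, (∀ v, u ⬝ᵥ (G *ᵥ v) = 0) → u = 0) ∧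
    -- the image of `R` restricted to skew-symmetric matrices is exactly `𝔤_L`
    ({Y : Matrix (Fin m ⊕ Fin n) (Fin m ⊕ Fin n) ℝ |
        ∃ X, (∀ u v, (X *ᵥ u) ⬝ᵥ (G *ᵥ v) = - u ⬝ᵥ (G *ᵥ (X *ᵥ v))) ∧
          (∑ j ∈ Finset.range n, L ^ (n - 1 - j) * X * L ^ j) = Y} =
      {Y : Matrix (Fin m ⊕ Fin n) (Fin m ⊕ Fin n) ℝ |
        (∀ u v, (Y *ᵥ u) ⬝ᵥ (G *ᵥ v) = - u ⬝ᵥ (G *ᵥ (Y *ᵥ v))) ∧ Y * L = L * Y}) ∧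
    -- in particular, `𝔤_L` is a Berger algebra
    IsBergerMat {Y : Matrix (Fin m ⊕ Fin n) (Fin m ⊕ Fin n) ℝ |
        (∀ u v, (Y *ᵥ u) ⬝ᵥ (G *ᵥ v) = - u ⬝ᵥ (G *ᵥ (Y *ᵥ v))) ∧ Y * L = L * Y} := by
  have e1 : ε₁ * ε₁ = 1 := by rcases hε₁ with h | h <;> rw [h] <;> norm_num
  have e2 : ε₂ * ε₂ = 1 := by rcases hε₂ with h | h <;> rw [h] <;> norm_num
  have n1 : ε₁ ≠ 0 := by rintro h; simp [h] at e1
  have n2 : ε₂ ≠ 0 := by rintro h; simp [h] at e2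
  have hGt : Gᵀ = G := by
    rw [hGdef, Matrix.fromBlocks_transpose]
    simp [ad_transpose]
  have hGG : G * G = 1 := by
    rw [hGdef, Matrix.fromBlocks_multiply]
    simp [ad_sq, smul_smul, e1, e2, Matrix.fromBlocks_one]
  have hLG : Lᵀ * G = G * L := by
    rw [hGdef, hLdef, Matrix.fromBlocks_transpose, Matrix.fromBlocks_multiply,
      Matrix.fromBlocks_multiply]
    simp [ad_jb]
  have hLpow : ∀ k, L ^ k = Matrix.fromBlocks (JordanBlock m ^ k) 0 0 (JordanBlock n ^ k) := by
    intro k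
    rw [hLdef, Matrix.fromBlocks_diagonal_pow]
  have hLn : L ^ n = 0 := by
    rw [hLpow, jb_pow_zero m n hmn, jb_pow_zero n n le_rfl, Matrix.fromBlocks_zero]
  simp only [skew_iff, ← Rop_apply]
  have himg : ∀ Y : Matrix (Fin m ⊕ Fin n) (Fin m ⊕ Fin n) ℝ, Y ∈ gL L G →
      ∃ X, Xᵀ * G = -(G * X) ∧ Rop L n X = Y := by
    rintro Y ⟨hY, hYL⟩
    set T : Matrix (Fin m ⊕ Fin n) (Fin m ⊕ Fin n) ℝ :=
      Matrix.fromBlocks 0 0 0 (cornerT n) with hT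
    have hTG : Tᵀ * G = G * T := by
      rw [hGdef, hT, Matrix.fromBlocks_transpose, Matrix.fromBlocks_multiply,
        Matrix.fromBlocks_multiply]
      simp [corner_ad]
    have hRT : Rop L n T = Matrix.fromBlocks 0 0 0 1 := by
      rw [Rop_apply, ← corner_sum n]
      simp only [hLpow, hT, Matrix.fromBlocks_multiply]
      simp only [Matrix.mul_zero, Matrix.zero_mul, add_zero, zero_add]
      ext i j
      rw [Matrix.sum_apply]
      rcases i with i | i <;> rcases j with j | j <;> simp [Matrix.sum_apply]
    refine ⟨Y * T + T * Y, ?_, ?_⟩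
    · simp only [Matrix.transpose_add, Matrix.transpose_mul, Matrix.add_mul, Matrix.mul_add,
        Matrix.mul_assoc, hY, hTG]
      simp only [Matrix.mul_neg, ← Matrix.mul_assoc, hY, hTG, Matrix.neg_mul]
      abel
    · rw [map_add, Rop_mul_left L Y T n hYL, Rop_mul_right L Y T n hYL, hRT]
      obtain ⟨A, B, C, D, rfl⟩ : ∃ A B C D, Y = Matrix.fromBlocks A B C D :=
        ⟨_, _, _, _, (Matrix.fromBlocks_toBlocks Y).symm⟩
      rw [hLdef] at hYL
      rw [hGdef] at hY
      simp only [Matrix.fromBlocks_transpose, Matrix.fromBlocks_multiply, Matrix.fromBlocks_neg,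
        Matrix.fromBlocks_inj, Matrix.mul_zero, Matrix.zero_mul, add_zero, zero_add,
        Matrix.mul_smul, Matrix.smul_mul, ← smul_neg] at hY hYL
      have hA := skew_comm_zero m A (smul_right_injective _ n1 hY.1) hYL.1
      have hD := skew_comm_zero n D (smul_right_injective _ n2 hY.2.2.2) hYL.2.2.2
      simp [Matrix.fromBlocks_multiply, Matrix.fromBlocks_add, hA, hD]
  refine ⟨?_, ?_, ?_, ?_⟩
  · intro u v
    rw [form_left, hLG, Matrix.mulVec_mulVec]
  · intro u hu
    have := hu (G *ᵥ u)
    rw [Matrix.mulVec_mulVec, hGG, Matrix.one_mulVec] at this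
    exact dotProduct_self_eq_zero.1 this
  · ext Y
    constructor
    · rintro ⟨X, hX, rfl⟩
      exact ⟨Rop_skew L G n hLG X hX, Rop_comm L n hLn X⟩
    · intro hY
      exact himg Y hY
  · refine congrArg (fun S : Submodule ℝ (Matrix (Fin m ⊕ Fin n) (Fin m ⊕ Fin n) ℝ) =>
      (S : Set (Matrix (Fin m ⊕ Fin n) (Fin m ⊕ Fin n) ℝ))) (?_ : _ = gL L G)
    apply le_antisymm
    · rw [Submodule.span_le]
      rintro A ⟨R, _, hR, u, v, rfl⟩
      exact hR u v
    · intro Y hY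
      obtain ⟨X, hX, rfl⟩ := himg Y hY
      rw [skew_decomp G X hGt hGG hX]
      simp only [map_sum, map_smul]
      refine Submodule.sum_mem _ fun i _ => Submodule.sum_mem _ fun j _ =>
        Submodule.smul_mem _ _ (Submodule.subset_span ?_)
      refine ⟨fun u v => Rop L n (wedge G u v), curv L G n hGt hLG, fun u v => ?_, _, _, rfl⟩
      exact ⟨Rop_skew L G n hLG _ (wedge_skew G hGt u v), Rop_comm L n hLn _⟩
end

section
/- Let L be any g-symmetric endomorphism of V. Then there exists a formal curvature tensor R on V, all of whose values lie in 𝔤_L, such that the values {R(u,v) : u, v ∈ V} span 𝔤_L as a vector space. Consequently, 𝔤_L is a Berger algebra. -/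
/-- A formal curvature tensor on `V`: an alternating bilinear map
`R : V × V → End(V)` satisfying the Bianchi identity. -/
def IsFormalCurvature {V : Type*} [AddCommGroup V] [Module ℝ V]
    (R : V → V → Module.End ℝ V) : Prop :=
  (∀ u u' v : V, R (u + u') v = R u v + R u' v) ∧
  (∀ (c : ℝ) (u v : V), R (c • u) v = c • R u v) ∧
  (∀ u v v' : V, R u (v + v') = R u v + R u v') ∧
  (∀ (c : ℝ) (u v : V), R u (c • v) = c • R u v) ∧
  (∀ u : V, R u u = 0) ∧
  (∀ u v w : V, R u v w + R v w u + R w u v = 0)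

/-- A set `h ⊆ End(V)` (e.g. a Lie subalgebra) is a Berger algebra if it is spanned,
as a vector space, by the values of all formal curvature tensors whose values lie
in `h`. -/
def IsBerger {V : Type*} [AddCommGroup V] [Module ℝ V]
    (h : Set (Module.End ℝ V)) : Prop :=
  (Submodule.span ℝ {A : Module.End ℝ V |
      ∃ R, IsFormalCurvature R ∧ (∀ u v, R u v ∈ h) ∧ ∃ u v, R u v = A} :
    Set (Module.End ℝ V)) = h

section
open Polynomial
set_option linter.unusedSectionVars false
variable {V : Type*} [AddCommGroup V] [Module ℝ V] [FiniteDimensional ℝ V]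

theorem h_ext {g : LinearMap.BilinForm ℝ V} (hn : g.Nondegenerate) {x y : V}
    (h : ∀ z, g x z = g y z) : x = y := by
  rw [← sub_eq_zero]
  apply hn.1
  intro z
  simp [h z]

theorem h_adj {g : LinearMap.BilinForm ℝ V} (hs : ∀ u v : V, g u v = g v u)
    (hn : g.Nondegenerate) :
    ∃ adj : Module.End ℝ V → Module.End ℝ V, ∀ A x y, g (adj A x) y = g x (A y) := by
  refine ⟨fun A => g.leftAdjointOfNondegenerate hn A, fun A x y => ?_⟩
  have := g.isAdjointPairLeftAdjointOfNondegenerate hn A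
  exact this x y

theorem h_aeval_symm {g : LinearMap.BilinForm ℝ V} {L : Module.End ℝ V}
    (hL : ∀ u v : V, g (L u) v = g u (L v)) (p : ℝ[X]) (x y : V) :
    g (aeval L p x) y = g x (aeval L p y) := by
  induction p using Polynomial.induction_on' generalizing x y with
  | add p q hp hq => simp [hp, hq]
  | monomial n a =>
    have : ∀ x y, g ((L ^ n) x) y = g x ((L ^ n) y) := by
      induction n with
      | zero => simp
      | succ n ih =>
        intro x y
        rw [pow_succ, Module.End.mul_apply, ih, hL, ← Module.End.mul_apply, ← pow_succ', pow_succ]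
    simp [aeval_monomial, this]

/-- commuting with polynomials -/
theorem h_aeval_comm {L Y : Module.End ℝ V} (h : Y * L = L * Y) (p : ℝ[X]) (x : V) :
    Y (aeval L p x) = aeval L p (Y x) := by
  have : Commute Y (aeval L p) := by
    induction p using Polynomial.induction_on' with
    | add p q hp hq => rw [map_add]; exact hp.add_right hq
    | monomial n a =>
      rw [aeval_monomial]
      exact Commute.mul_right (Algebra.commutes a Y).symm (Commute.pow_right h n)
  exact LinearMap.congr_fun this x

theorem h_polar {g : LinearMap.BilinForm ℝ V} (hs : ∀ u v : V, g u v = g v u)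
    (hn : g.Nondegenerate) {A : Module.End ℝ V} (hA : ∀ x y, g (A x) y = g x (A y))
    (h0 : A ≠ 0) : ∃ x, g (A x) x ≠ 0 := by
  by_contra! h
  apply h0
  ext x
  refine h_ext hn fun z => ?_
  have h1 := h (x + z)
  simp only [map_add, LinearMap.add_apply, h x, h z] at h1
  rw [hA z x, hs z] at h1
  simp
  linarith

/-- the orthogonal projection onto the nondegenerate cyclic submodule of `e` -/
theorem h_cyc {g : LinearMap.BilinForm ℝ V} (hs : ∀ u v : V, g u v = g v u)
    {L : Module.End ℝ V} {e : V}
    (hnd : ∀ b : ℝ[X], (∀ a : ℝ[X], g (aeval L b e) (aeval L a e) = 0) → aeval L b e = 0) :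
    ∃ s : V →ₗ[ℝ] ℝ[X],
      (∀ (v : V) (a : ℝ[X]), g (aeval L (s v) e) (aeval L a e) = g v (aeval L a e)) ∧
      (∀ v : V, (∀ a : ℝ[X], g v (aeval L a e) = 0) → s v = 0) := by
  let φ : ℝ[X] →ₗ[ℝ] V := (LinearMap.applyₗ e) ∘ₗ (aeval L).toLinearMap
  have hφ : ∀ a, φ a = aeval L a e := fun a => rfl
  let W := LinearMap.range φ
  have hr : g.IsRefl := fun x y h => by rw [hs]; exact h
  have hW : (g.restrict W).Nondegenerate := by
    have hl : ∀ x : W, (∀ y, (g.restrict W) x y = 0) → x = 0 := by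
      rintro ⟨_, b, rfl⟩ h
      apply Subtype.ext
      exact hnd b fun a => h ⟨φ a, a, rfl⟩
    refine ⟨hl, fun y h => hl y fun x => ?_⟩
    rw [← h x]
    exact hs _ _
  have hc := LinearMap.BilinForm.isCompl_orthogonal_of_restrict_nondegenerate hr hW
  obtain ⟨σ, hσ⟩ := LinearMap.exists_rightInverse_of_surjective φ.rangeRestrict
    (LinearMap.range_rangeRestrict φ)
  refine ⟨σ ∘ₗ W.projectionOnto _ hc, fun v a => ?_, fun v h => ?_⟩
  swap
  · have h2 : v ∈ g.orthogonal W := by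
      rw [LinearMap.BilinForm.mem_orthogonal_iff]
      rintro _ ⟨a, rfl⟩
      exact (hs _ _).trans (h a)
    simp only [LinearMap.comp_apply]
    rw [(Submodule.projectionOnto_apply_eq_zero_iff hc).2 h2, map_zero]
  have h1 : aeval L (σ (W.projectionOnto _ hc v)) e = W.projectionOnto _ hc v := by
    rw [← hφ]
    exact congrArg Subtype.val (LinearMap.congr_fun hσ (W.projectionOnto _ hc v))
  simp only [LinearMap.comp_apply]
  rw [h1, ← sub_eq_zero, ← LinearMap.sub_apply, ← map_sub, hs]
  have h2 : v - (W.projectionOnto _ hc v : V) ∈ g.orthogonal W := by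
    rw [← Submodule.projectionOnto_apply_eq_zero_iff hc, map_sub, sub_eq_zero]
    exact (Submodule.projectionOnto_apply_left hc _).symm
  have h3 := (LinearMap.BilinForm.mem_orthogonal_iff.1 h2) (φ a) ⟨a, rfl⟩
  have h4 : g (φ a) (v - (W.projectionOnto _ hc v : V)) = 0 := h3
  rw [← neg_sub, map_neg, ← hφ, h4, neg_zero]

theorem h_gen {g : LinearMap.BilinForm ℝ V} (hs : ∀ u v : V, g u v = g v u)
    (hn : g.Nondegenerate) {L P : Module.End ℝ V}
    (hL : ∀ u v : V, g (L u) v = g u (L v))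
    (hP : ∀ u v : V, g (P u) v = g u (P v)) (hPP : ∀ v, P (P v) = P v)
    (hPL : P * L = L * P) (hP0 : P ≠ 0) :
    ∃ (e : V) (m N : ℝ[X]), P e = e ∧ e ≠ 0 ∧ IsCoprime m N ∧
      (∀ v, aeval L (N * m) (P v) = 0) ∧ aeval L N e = 0 ∧
      (∀ b : ℝ[X], aeval L b e = 0 → N ∣ b) ∧
      (∀ b : ℝ[X], (∀ a : ℝ[X], g (aeval L b e) (aeval L a e) = 0) → aeval L b e = 0) := by
  classical
  have hex : ∃ k : ℕ, ∃ f : ℝ[X], f ≠ 0 ∧ f.natDegree = k ∧ aeval L f * P = 0 :=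
    ⟨_, minpoly ℝ L, minpoly.ne_zero (Algebra.IsIntegral.isIntegral L), rfl, by
      rw [minpoly.aeval, zero_mul]⟩
  obtain ⟨f, hf0, hfk, hfP⟩ := Nat.find_spec hex
  have hmin : ∀ f' : ℝ[X], f' ≠ 0 → aeval L f' * P = 0 → f.natDegree ≤ f'.natDegree := by
    intro f' h1 h2
    rw [hfk]
    exact Nat.find_min' hex ⟨f', h1, rfl, h2⟩
  have hfu : ¬ IsUnit f := by
    intro hu
    obtain ⟨c, hc⟩ := hu.exists_right_inv
    apply hP0
    have : aeval L (c * f) * P = 0 := by rw [map_mul, mul_assoc, hfP, mul_zero]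
    rwa [mul_comm, hc, map_one, one_mul] at this
  obtain ⟨q, hq, hqf⟩ := WfDvdMonoid.exists_irreducible_factor hfu hf0
  have hfin : FiniteMultiplicity q f := FiniteMultiplicity.of_not_isUnit hq.not_isUnit hf0
  obtain ⟨m, hm, hqm⟩ := hfin.exists_eq_pow_mul_and_not_dvd
  have hn1 : multiplicity q f ≠ 0 := by
    intro h0
    rw [h0, pow_zero, one_mul] at hm
    exact hqm (hm ▸ hqf)
  obtain ⟨n, hnn⟩ := Nat.exists_eq_succ_of_ne_zero hn1
  rw [hnn] at hm
  have hcop : IsCoprime m q := ((hq.coprime_iff_not_dvd).2 hqm).symm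
  have hA0 : aeval L (m * m * q ^ n) * P ≠ 0 := by
    intro h0
    obtain ⟨x, y, hxy⟩ := hcop
    have h1 : q ^ n * m = x * (m * m * q ^ n) + y * f := by
      rw [hm, pow_succ]
      linear_combination (-(q ^ n * m)) * hxy
    have h2 : aeval L (q ^ n * m) * P = 0 := by
      rw [h1, map_add, map_mul, map_mul _ y, add_mul, mul_assoc, h0, mul_assoc, hfP]
      simp
    have h3 : q ^ n * m ≠ 0 := by
      intro h
      apply hf0
      rw [hm, pow_succ]
      linear_combination q * h
    have h4 := hmin _ h3 h2
    have h5 : f = q * (q ^ n * m) := by rw [hm, pow_succ]; ring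
    rw [h5, natDegree_mul hq.ne_zero h3] at h4
    have := hq.natDegree_pos
    omega
  have hPT : ∀ (p : ℝ[X]) x, P (aeval L p x) = aeval L p (P x) := h_aeval_comm hPL
  have hT := h_aeval_symm hL
  have hTT : ∀ (p r : ℝ[X]) x, aeval L (p * r) x = aeval L p (aeval L r x) := by
    intro p r x; rw [map_mul]; rfl
  obtain ⟨x, hx⟩ := h_polar hs hn (A := aeval L (m * m * q ^ n) * P) (by
    intro x y
    rw [Module.End.mul_apply, Module.End.mul_apply, hT, hP, hPT]) hA0
  set e := aeval L m (P x) with he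
  have hPe : P e = e := by rw [he, hPT, hPP]
  have hge : g (aeval L (q ^ n) e) e ≠ 0 := by
    intro h
    apply hx
    rw [← h, Module.End.mul_apply, he, ← hTT, ← hT, ← hP, hPT, hPT, hPP, ← hTT,
      ← mul_assoc, mul_right_comm, mul_comm _ (q ^ n)]
  have hNP : ∀ v, aeval L (q ^ (n + 1) * m) (P v) = 0 := by
    intro v
    rw [← Nat.succ_eq_add_one, ← hm]
    exact LinearMap.congr_fun hfP v
  have hNe : aeval L (q ^ (n + 1)) e = 0 := by rw [he, ← hTT, hNP]
  have key : ∀ b : ℝ[X], ¬ q ^ (n + 1) ∣ b → ∃ c : ℝ[X], aeval L (q ^ n) e = aeval L c (aeval L b e) := by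
    intro b hb
    have h1 : EuclideanDomain.gcd b (q ^ (n + 1)) ∣ q ^ (n + 1) := EuclideanDomain.gcd_dvd_right _ _
    obtain ⟨i, hi, hai⟩ := (dvd_prime_pow hq.prime _).1 h1
    have hin : i ≤ n := by
      by_contra hcon
      have : i = n + 1 := by omega
      subst this
      exact hb (hai.symm.dvd.trans (EuclideanDomain.gcd_dvd_left _ _))
    obtain ⟨d, hd⟩ : EuclideanDomain.gcd b (q ^ (n + 1)) ∣ q ^ n := hai.dvd.trans (pow_dvd_pow q hin)
    rw [EuclideanDomain.gcd_eq_gcd_ab] at hd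
    refine ⟨EuclideanDomain.gcdA b (q ^ (n + 1)) * d, ?_⟩
    have h2 : q ^ n = EuclideanDomain.gcdA b (q ^ (n + 1)) * d * b
      + EuclideanDomain.gcdB b (q ^ (n + 1)) * d * q ^ (n + 1) := by
      linear_combination hd
    rw [h2, map_add, LinearMap.add_apply, hTT _ b, hTT _ (q ^ (n + 1)), hNe, map_zero, add_zero]
  refine ⟨e, m, q ^ (n + 1), hPe, ?_, hcop.pow_right, hNP, hNe, ?_, ?_⟩
  · intro h
    apply hge
    rw [h]; simp
  · intro b hb
    by_contra hcon
    obtain ⟨c, hc⟩ := key b hcon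
    apply hge
    rw [hc, hb]; simp
  · intro b hb
    by_cases hcon : q ^ (n + 1) ∣ b
    · obtain ⟨c, rfl⟩ := hcon
      rw [mul_comm, hTT, hNe, map_zero]
    · obtain ⟨c, hc⟩ := key b hcon
      exfalso
      apply hge
      rw [hc, hT, hb]

/-- the invariant skew endomorphisms supported on the range of `P` -/
def hG (g : LinearMap.BilinForm ℝ V) (L P : Module.End ℝ V) : Submodule ℝ (Module.End ℝ V) where
  carrier := {X | (∀ x y : V, g (X x) y = - g x (X y)) ∧ X * L = L * X ∧
    (∀ x, P (X x) = X x) ∧ (∀ x, X (P x) = X x)}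
  add_mem' := by
    rintro A B ⟨h1, h2, h3, h4⟩ ⟨k1, k2, k3, k4⟩
    refine ⟨fun x y => ?_, ?_, fun x => ?_, fun x => ?_⟩
    · simp [h1, k1]; ring
    · rw [add_mul, mul_add, h2, k2]
    · simp [h3, k3]
    · simp [h4, k4]
  zero_mem' := by simp
  smul_mem' := by
    rintro c A ⟨h1, h2, h3, h4⟩
    refine ⟨fun x y => ?_, ?_, fun x => ?_, fun x => ?_⟩
    · simp [h1]
    · simp [h2]
    · simp [h3]
    · simp [h4]

theorem h_main {g : LinearMap.BilinForm ℝ V} (hs : ∀ u v : V, g u v = g v u)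
    (hn : g.Nondegenerate) {L : Module.End ℝ V}
    (hL : ∀ u v : V, g (L u) v = g u (L v)) (k : ℕ) : ∀ (P : Module.End ℝ V),
    (∀ u v : V, g (P u) v = g u (P v)) → (∀ v, P (P v) = P v) →
    P * L = L * P → Module.finrank ℝ (LinearMap.range P) = k →
    ∃ R : V → V → Module.End ℝ V, IsFormalCurvature R ∧
      (∀ u v, R u v ∈ hG g L P) ∧ (∀ u v, R (P u) (P v) = R u v) ∧
      hG g L P ≤ Submodule.span ℝ {A | ∃ u v, R u v = A} := by
  induction k using Nat.strong_induction_on with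
  | _ k ih =>
  intro P hP hPP hPL hk
  by_cases hP0 : P = 0
  · subst hP0
    refine ⟨fun _ _ => 0, ?_, fun _ _ => Submodule.zero_mem _, fun _ _ => rfl, ?_⟩
    · refine ⟨?_, ?_, ?_, ?_, ?_, ?_⟩ <;> simp
    · rintro X ⟨-, -, h, -⟩
      have : X = 0 := by ext x; rw [← h x]; rfl
      rw [this]; exact Submodule.zero_mem _
  obtain ⟨e, m, N, hPe, he0, hcop, hNP, hNe, hdvd, hnd⟩ := h_gen hs hn hL hP hPP hPL hP0
  obtain ⟨s, hs1, hs2⟩ := h_cyc hs hnd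
  obtain ⟨adj, hadj⟩ := h_adj hs hn
  have hT := h_aeval_symm hL
  have hTT : ∀ (p r : ℝ[X]) x, aeval L (p * r) x = aeval L p (aeval L r x) := by
    intro p r x; rw [map_mul]; rfl
  have hPT : ∀ (p : ℝ[X]) x, P (aeval L p x) = aeval L p (P x) := h_aeval_comm hPL
  have hLT : ∀ x, aeval L (X : ℝ[X]) x = L x := by intro x; rw [aeval_X]
  let Q : Module.End ℝ V := (LinearMap.applyₗ e) ∘ₗ (aeval L).toLinearMap ∘ₗ s
  have hQ : ∀ v, Q v = aeval L (s v) e := fun v => rfl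
  -- uniqueness of the projection
  have hQu : ∀ (v : V) (b : ℝ[X]), (∀ a : ℝ[X], g (aeval L b e) (aeval L a e) = g v (aeval L a e)) →
      Q v = aeval L b e := by
    intro v b h
    rw [hQ, ← sub_eq_zero, ← LinearMap.sub_apply, ← map_sub]
    apply hnd
    intro a
    rw [map_sub, LinearMap.sub_apply, map_sub, LinearMap.sub_apply, hs1, h, sub_self]
  have hQe : ∀ b : ℝ[X], Q (aeval L b e) = aeval L b e := fun b => hQu _ b fun a => rfl
  have hQQ : ∀ v, Q (Q v) = Q v := fun v => by rw [hQ v, hQe]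
  have hQs : ∀ u v, g (Q u) v = g u (Q v) := by
    intro u v
    rw [hQ v, ← hs1 u, ← hQ u, hs, hQ u, ← hs1 v, hs]
  have hQL : Q * L = L * Q := by
    ext v
    rw [Module.End.mul_apply, Module.End.mul_apply, hQ v, ← hLT (aeval L _ _), ← hTT]
    apply hQu
    intro a
    rw [hTT, hLT, hL, hL, ← hLT, ← hTT, hs1]
  have hPa : ∀ a : ℝ[X], P (aeval L a e) = aeval L a e := fun a => by rw [hPT, hPe]
  have hPQ : ∀ v, P (Q v) = Q v := fun v => by rw [hQ, hPa]
  have hsP : ∀ v, s (P v) = s v := by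
    intro v
    rw [← sub_eq_zero, ← map_sub]
    apply hs2
    intro a
    rw [map_sub, LinearMap.sub_apply, hP, hPa, sub_self]
  have hQP : ∀ v, Q (P v) = Q v := fun v => by rw [hQ, hQ, hsP]
  obtain ⟨P', hP'⟩ : ∃ P' : Module.End ℝ V, ∀ v, P' v = P v - Q v := ⟨P - Q, fun v => rfl⟩
  have hP's : ∀ u v : V, g (P' u) v = g u (P' v) := by
    intro u v
    rw [hP', hP', map_sub, map_sub, LinearMap.sub_apply, hP, hQs]
  have hPP' : ∀ v, P (P' v) = P' v := fun v => by rw [hP', map_sub, hPP, hPQ]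
  have hP'P : ∀ v, P' (P v) = P' v := fun v => by rw [hP', hP', hPP, hQP]
  have hQP' : ∀ v, Q (P' v) = 0 := fun v => by rw [hP', map_sub, hQP, hQQ, sub_self]
  have hP'Q : ∀ v, P' (Q v) = 0 := fun v => by rw [hP', hPQ, hQQ, sub_self]
  have hP'P' : ∀ v, P' (P' v) = P' v := fun v => by rw [hP' (P' v), hPP', hQP', sub_zero]
  have hP'L : P' * L = L * P' := by
    have : P' = P - Q := LinearMap.ext hP'
    rw [this, sub_mul, mul_sub, hPL, hQL]
  have hP'T : ∀ (p : ℝ[X]) x, P' (aeval L p x) = aeval L p (P' x) := h_aeval_comm hP'L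
  have hQe1 : Q e = e := by simpa using hQe 1
  have hP'e : P' e = 0 := by rw [← hQe1, hP'Q]
  have hsP' : ∀ v, s (P' v) = 0 := by
    intro v
    apply hs2
    intro a
    rw [← hQe, ← hQs, hQP', map_zero, LinearMap.zero_apply]
  have hlt : Module.finrank ℝ (LinearMap.range P') < k := by
    rw [← hk]
    apply Submodule.finrank_lt_finrank_of_lt
    refine lt_of_le_of_ne ?_ ?_
    · rintro _ ⟨v, rfl⟩
      exact ⟨P' v, hPP' v⟩
    · intro heq
      have : e ∈ LinearMap.range P' := by rw [heq]; exact ⟨e, hPe⟩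
      obtain ⟨v, hv⟩ := this
      apply he0
      rw [← hv, ← hP'P', hv, hP'e]
  obtain ⟨R', ⟨b1, b2, b3, b4, b5, b6⟩, hR'G, hR'P, hR'span⟩ :=
    ih _ hlt P' hP's hP'P' hP'L rfl
  -- polynomials killing `e` kill `m P'`
  have hkill : ∀ (b c : ℝ[X]) v, aeval L b e = aeval L c e →
      aeval L (b * m) (P' v) = aeval L (c * m) (P' v) := by
    intro b c v h
    obtain ⟨d, hd⟩ := hdvd (b - c) (by rw [map_sub, LinearMap.sub_apply, h, sub_self])
    have : b * m = d * (N * m) + c * m := by linear_combination m * hd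
    rw [this, map_add, LinearMap.add_apply, hTT d, ← hPP' v, hNP, map_zero, zero_add]
  let M : V → V → Module.End ℝ V := fun u v =>
    (LinearMap.applyₗ (P' v)) ∘ₗ (aeval L).toLinearMap ∘ₗ (LinearMap.mulLeft ℝ (s u * m)) ∘ₗ s
  have hM : ∀ u v w, M u v w = aeval L (s u * m * s w) (P' v) := fun u v w => rfl
  clear_value M
  have hML : ∀ u v w, M u v (L w) = L (M u v w) := by
    intro u v w
    rw [hM, hM, ← hLT (aeval L _ _), ← hTT]
    have h1 : aeval L (s u * s (L w)) e = aeval L (s u * (Polynomial.X * s w)) e := by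
      rw [hTT, hTT, hTT, ← hQ, hLT, ← hQ]
      exact congrArg _ (LinearMap.congr_fun hQL w)
    have h2 := hkill _ _ v h1
    rw [show s u * m * s (L w) = s u * s (L w) * m by ring, h2]
    congr 2
    ring
  let R0 : V → V → Module.End ℝ V := fun u v => (M u v - adj (M u v)) - (M v u - adj (M v u))
  have hR0 : ∀ u v x y, g (R0 u v x) y =
      g (M u v x) y - g x (M u v y) - (g (M v u x) y - g x (M v u y)) := by
    intro u v x y
    simp only [R0, LinearMap.sub_apply, map_sub, hadj]
  have hsw : ∀ u v w z, g w (M u v z) = g v (M u w z) := by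
    intro u v w z
    rw [hM, hM, ← hT, hs, ← hP'T, hP's]
  have hMsw : ∀ u v w, M u v w = M w v u := by
    intro u v w
    rw [hM, hM, mul_right_comm, mul_comm (s u), mul_right_comm]
  have hMadd1 : ∀ u u' v w, M (u + u') v w = M u v w + M u' v w := by
    intro u u' v w
    rw [hM, hM, hM, map_add, add_mul, add_mul, map_add, LinearMap.add_apply]
  have hMadd2 : ∀ u v v' w, M u (v + v') w = M u v w + M u v' w := by
    intro u v v' w
    rw [hM, hM, hM, map_add, map_add]
  have hMs1 : ∀ (c : ℝ) u v w, M (c • u) v w = c • M u v w := by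
    intro c u v w
    rw [hM, hM, map_smul, smul_mul_assoc, smul_mul_assoc, map_smul, LinearMap.smul_apply]
  have hMs2 : ∀ (c : ℝ) u v w, M u (c • v) w = c • M u v w := by
    intro c u v w
    rw [hM, hM, map_smul, map_smul]
  have hPM : ∀ u v w, P (M u v w) = M u v w := by
    intro u v w
    rw [hM, hPT, hPP']
  have hMP : ∀ u v w, M u v (P w) = M u v w := by
    intro u v w
    rw [hM, hM, hsP]
  have hMP1 : ∀ u v w, M (P u) v w = M u v w := by
    intro u v w
    rw [hM, hM, hsP]
  have hMP2 : ∀ u v w, M u (P v) w = M u v w := by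
    intro u v w
    rw [hM, hM, hP'P]
  have hR0P' : ∀ u v, R0 (P' u) (P' v) = 0 := by
    intro u v
    ext x
    refine h_ext hn fun y => ?_
    rw [hR0]
    simp [hM, hsP']
  have hR0G : ∀ u v, R0 u v ∈ hG g L P := by
    intro u v
    refine ⟨fun x y => ?_, ?_, fun x => ?_, fun x => ?_⟩
    · rw [hs x, hR0, hR0, hs y, hs y, hs _ x, hs _ x]; ring
    · ext x
      refine h_ext hn fun y => ?_
      rw [Module.End.mul_apply, Module.End.mul_apply, hL, hR0, hR0]
      simp only [hML, hL]
    · refine h_ext hn fun y => ?_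
      rw [hP, hR0, hR0]
      simp only [hMP, ← hP, hPM]
    · refine h_ext hn fun y => ?_
      rw [hR0, hR0]
      simp only [hMP, hP, hPM]
  refine ⟨fun u v => R0 u v + R' u v, ⟨?_, ?_, ?_, ?_, ?_, ?_⟩, ?_, ?_, ?_⟩
  · intro u u' v
    have : R0 (u + u') v = R0 u v + R0 u' v := by
      ext x
      refine h_ext hn fun y => ?_
      simp only [LinearMap.add_apply, map_add, hR0, hMadd1, hMadd2]
      ring
    simp only [this, b1]; abel
  · intro c u v
    have : R0 (c • u) v = c • R0 u v := by
      ext x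
      refine h_ext hn fun y => ?_
      simp only [LinearMap.smul_apply, map_smul, hR0, hMs1, hMs2, smul_eq_mul]
      ring
    simp only [this, b2, smul_add]
  · intro u v v'
    have : R0 u (v + v') = R0 u v + R0 u v' := by
      ext x
      refine h_ext hn fun y => ?_
      simp only [LinearMap.add_apply, map_add, hR0, hMadd1, hMadd2]
      ring
    simp only [this, b3]; abel
  · intro c u v
    have : R0 u (c • v) = c • R0 u v := by
      ext x
      refine h_ext hn fun y => ?_
      simp only [LinearMap.smul_apply, map_smul, hR0, hMs1, hMs2, smul_eq_mul]
      ring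
    simp only [this, b4, smul_add]
  · intro u
    simp only [b5, R0, sub_self, add_zero]
  · intro u v w
    have : R0 u v w + R0 v w u + R0 w u v = 0 := by
      refine h_ext hn fun y => ?_
      simp only [LinearMap.add_apply, map_add, hR0, map_zero, LinearMap.zero_apply]
      rw [hsw u v w y, hsw v u w y, hsw w u v y, hMsw u v w, hMsw v u w, hMsw v w u]
      ring
    have h6 := b6 u v w
    simp only [LinearMap.add_apply]
    calc _ = (R0 u v w + R0 v w u + R0 w u v) + (R' u v w + R' v w u + R' w u v) := by abel
      _ = 0 := by rw [this, h6, add_zero]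
  · intro u v
    refine Submodule.add_mem _ (hR0G u v) ?_
    obtain ⟨h1, h2, h3, h4⟩ := hR'G u v
    refine ⟨h1, h2, fun x => ?_, fun x => ?_⟩
    · rw [← h3, hPP']
    · rw [← h4, hP'P, h4]
  · intro u v
    have h1 : R0 (P u) (P v) = R0 u v := by
      ext x
      refine h_ext hn fun y => ?_
      simp only [hR0, hMP1, hMP2]
    have h2 : R' (P u) (P v) = R' u v := by
      rw [← hR'P, hP'P, hP'P, hR'P]
    simp only [h1, h2]
  · rintro Y ⟨y1, y2, y3, y4⟩
    have hYT : ∀ (p : ℝ[X]) x, Y (aeval L p x) = aeval L p (Y x) := h_aeval_comm y2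
    obtain ⟨α, β, hαβ⟩ := hcop
    set x0 := P' (Y e) with hx0
    have hNx : aeval L N x0 = 0 := by rw [hx0, ← hP'T, ← hYT, hNe, map_zero, map_zero]
    have hmx : aeval L m (aeval L α x0) = x0 := by
      have : aeval L (α * m + β * N) x0 = x0 := by rw [hαβ]; simp
      rwa [map_add, LinearMap.add_apply, hTT β, hNx, map_zero, add_zero, mul_comm, hTT] at this
    have hQYQ : ∀ x, Q (Y (Q x)) = 0 := by
      intro x
      have h0 : ∀ c : ℝ[X], g (Y e) (aeval L c e) = 0 := by
        intro c
        have h1 := y1 e (aeval L c e)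
        rw [hYT, ← hT, hs e, hT] at h1
        linarith
      refine h_ext hn fun y => ?_
      rw [hQs, hQ, hQ, hYT, hT, ← hTT, h0]
      simp
    have hMe : ∀ w, M e (aeval L α x0) w = P' (Y (Q w)) := by
      intro w
      have h1 : aeval L (s e * s w) e = aeval L (s w) e := by
        rw [mul_comm, hTT, ← hQ e, hQe1]
      have h2 := hkill _ _ (aeval L α x0) h1
      have h3 : P' x0 = x0 := by rw [hx0, hP'P']
      rw [hM, mul_right_comm, h2, hTT, hP'T, h3, hmx, hQ,
        hYT, hP'T]
    have hMz : ∀ v w, M v e w = 0 := by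
      intro v w
      rw [hM, hP'e, map_zero]
    have hdec : Y = (R0 e (aeval L α x0) + R' e (aeval L α x0)) + P' * Y * P' := by
      have hz : R' e (aeval L α x0) = 0 := by
        rw [← hR'P, hP'e]
        have := b2 0 0 (P' (aeval L α x0))
        simpa using this
      rw [hz, add_zero]
      ext x
      refine h_ext hn fun y => ?_
      have hPs : ∀ v, P v = P' v + Q v := fun v => by rw [hP' v]; abel
      have e1 : Y x = P' (Y (P' x)) + P' (Y (Q x)) + Q (Y (P' x)) := by
        have := hQYQ x
        rw [← y4 x, ← y3, hPs, hPs, map_add, map_add, map_add, this]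
        abel
      have e2 : g (Q (Y (P' x))) y = - g x (P' (Y (Q y))) := by
        rw [hQs, y1, hP's]
      rw [LinearMap.add_apply, map_add, LinearMap.add_apply, hR0, e1]
      simp only [hMe, hMz, map_add, LinearMap.add_apply, e2, Module.End.mul_apply, map_zero,
        LinearMap.zero_apply]
      ring
    rw [hdec]
    refine Submodule.add_mem _ (Submodule.subset_span ⟨_, _, rfl⟩) ?_
    have hin : P' * Y * P' ∈ hG g L P' := by
      refine ⟨fun x y => ?_, ?_, fun x => ?_, fun x => ?_⟩
      · simp only [Module.End.mul_apply]
        rw [hP's, y1, hP's]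
      · rw [mul_assoc, hP'L, mul_assoc, ← mul_assoc Y, y2, ← mul_assoc, ← mul_assoc, hP'L]
        simp only [mul_assoc]
      · simp only [Module.End.mul_apply, hP'P']
      · simp only [Module.End.mul_apply, hP'P']
    refine Submodule.span_mono ?_ (hR'span hin)
    rintro _ ⟨u, v, rfl⟩
    refine ⟨P' u, P' v, ?_⟩
    simp only [hR0P', hR'P, zero_add]
end



/-- For any `g`-symmetric endomorphism `L` of `V`, there exists a formal
curvature tensor `R` on `V`, all of whose values lie in `𝔤_L`, such that the values
`{R(u,v)}` span `𝔤_L` as a vector space.  Consequently, `𝔤_L` is a Berger algebra. -/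
theorem stmt8 (V : Type*) [AddCommGroup V] [Module ℝ V] [FiniteDimensional ℝ V]
    (g : LinearMap.BilinForm ℝ V) (hg_symm : ∀ u v : V, g u v = g v u)
    (hg_nd : g.Nondegenerate)
    (L : Module.End ℝ V)
    (hL : ∀ u v : V, g (L u) v = g u (L v)) :
    (∃ R : V → V → Module.End ℝ V, IsFormalCurvature R ∧
        (∀ u v : V, R u v ∈ {X : Module.End ℝ V |
            (∀ x y : V, g (X x) y = - g x (X y)) ∧ X * L = L * X}) ∧
        (Submodule.span ℝ {A : Module.End ℝ V | ∃ u v : V, R u v = A} :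
            Set (Module.End ℝ V)) =
          {X : Module.End ℝ V |
            (∀ x y : V, g (X x) y = - g x (X y)) ∧ X * L = L * X}) ∧
      IsBerger {X : Module.End ℝ V |
          (∀ x y : V, g (X x) y = - g x (X y)) ∧ X * L = L * X} := by
  have hmem : ∀ X : Module.End ℝ V, X ∈ hG g L 1 ↔
      ((∀ x y : V, g (X x) y = - g x (X y)) ∧ X * L = L * X) := fun X =>
    ⟨fun h => ⟨h.1, h.2.1⟩, fun h => ⟨h.1, h.2, fun _ => rfl, fun _ => rfl⟩⟩
  have hset : {X : Module.End ℝ V | (∀ x y : V, g (X x) y = - g x (X y)) ∧ X * L = L * X} =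
      (hG g L 1 : Set (Module.End ℝ V)) := by
    ext X
    exact (hmem X).symm
  obtain ⟨R, hR, hRG, -, hspan⟩ := h_main hg_symm hg_nd hL _ 1 (fun _ _ => rfl) (fun _ => rfl)
    (by rw [one_mul, mul_one]) rfl
  rw [hset]
  refine ⟨⟨R, hR, hRG, ?_⟩, ?_⟩
  · apply congrArg
    refine le_antisymm (Submodule.span_le.2 ?_) hspan
    rintro _ ⟨u, v, rfl⟩
    exact hRG u v
  · unfold IsBerger
    apply congrArg
    refine le_antisymm (Submodule.span_le.2 ?_) (hspan.trans (Submodule.span_mono ?_))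
    · rintro _ ⟨R, -, h, u, v, rfl⟩
      exact h u v
    · rintro _ ⟨u, v, rfl⟩
      exact ⟨R, hR, hRG, u, v, rfl⟩
end
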